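/- Let R > 1/4 and let k ≠ 0, η be real numbers. Set p(t) := k² + (η − kt)² for t ≥ 0. Let Ω, Θ : [0,∞) → ℂ be differentiable functions satisfying the inviscid linearized Boussinesq–Couette system in the moving frame at frequency (k,η): Ω′(t) = −R·i·k·Θ(t) and Θ′(t) = −(i·k/p(t))·Ω(t). Then there exist constants 0 < C₁ ≤ C₂ depending only on R (independent of k, η, t and the solution) such that for all t ≥ 0: C₁·[ (k² + η²)^{−1/2}·|Ω(0)|² + (k² + η²)^{1/2}·|Θ(0)|² ] ≤ p(t)^{−1/2}·|Ω(t)|² + p(t)^{1/2}·|Θ(t)|² ≤ C₂·[ (k² + η²)^{−1/2}·|Ω(0)|² + (k² + η²)^{1/2}·|Θ(0)|² ]. -/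

import Mathlib

open Real MeasureTheory

noncomputable section

/-- The moving-frame Laplacian symbol `p(t) = k² + (η − kt)²`. -/
def pfun (k η t : ℝ) : ℝ := k ^ 2 + (η - k * t) ^ 2

/-- Its time derivative `p′(t) = −2k(η − kt)`. -/
def pder (k η t : ℝ) : ℝ := -(2 * k * (η - k * t))

/-- The symmetrizing weight `G(t) = p′(t)/(|k|·p(t)^{1/2})`. -/
def Gfun (k η t : ℝ) : ℝ := pder k η t / (|k| * Real.sqrt (pfun k η t))

/-- The exponential weight `N(t) = exp(−G(t)/(2√R − 1))`. -/
def Nfun (R k η t : ℝ) : ℝ := Real.exp (-(1 / (2 * Real.sqrt R - 1)) * Gfun k η t)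

/-- The inviscid damping multiplier `𝔍(t) = (1/2)·arctan(η/k − t)`. -/
def Jfun (k η t : ℝ) : ℝ := (1 / 2) * Real.arctan (η / k - t)

/-- The effective diffusivity `μ`. -/
def muDef (R ν κ : ℝ) : ℝ :=
  min ν κ * (1 - 1 / (4 * Real.sqrt R) - 1 / (4 * Real.sqrt R) * (max ν κ / min ν κ))

/-- The decay rate `λ`. -/
def lamDef (ν μ k : ℝ) : ℝ :=
  if μ ≤ |k| then μ ^ ((1 : ℝ) / 3) * |k| ^ ((2 : ℝ) / 3) else k ^ 2 / ν

/-- The weight `α`. -/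
def alphaDef (μ k : ℝ) : ℝ :=
  if |k| < μ then 1 else μ ^ ((2 : ℝ) / 3) * |k| ^ (-(2 : ℝ) / 3)

/-- The weight `β`. -/
def betaDef (μ k : ℝ) : ℝ :=
  if |k| < μ then μ⁻¹ else μ ^ ((1 : ℝ) / 3) * |k| ^ (-(4 : ℝ) / 3)

/-- `(Z, Q)` is a solution of the linearized symmetrized Boussinesq–Couette system
at frequency `(k, η)`. -/
def IsSol (R ν κ k η : ℝ) (Z Q : ℝ → ℂ) : Prop :=
  ∀ t : ℝ, 0 ≤ t →
    HasDerivAt Z ((((1 / 4) * (pder k η t / pfun k η t) : ℝ) : ℂ) * Z t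
        - ((Real.sqrt R * (|k| / Real.sqrt (pfun k η t)) : ℝ) : ℂ) * Q t
        - ((ν * pfun k η t : ℝ) : ℂ) * Z t) t ∧
    HasDerivAt Q (-(((1 / 4) * (pder k η t / pfun k η t) : ℝ) : ℂ) * Q t
        + ((Real.sqrt R * (|k| / Real.sqrt (pfun k η t)) : ℝ) : ℂ) * Z t
        - ((κ * pfun k η t : ℝ) : ℂ) * Q t) t

/-- The hypocoercive pointwise energy functional `E_k`. -/
def energy (R cτ cα cβ μ k η : ℝ) (Z Q : ℝ → ℂ) (t : ℝ) : ℝ :=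
  (Nfun R k η t + cτ * Jfun k η t) * (‖Z t‖ ^ 2 + ‖Q t‖ ^ 2)
    + 1 / (2 * Real.sqrt R) * Gfun k η t * (Nfun R k η t + cτ * Jfun k η t)
        * (Z t * (starRingEnd ℂ) (Q t)).re
    + cα * alphaDef μ k *
        ((Nfun R k η t + cτ * Jfun k η t) * (η - k * t) ^ 2 * (‖Z t‖ ^ 2 + ‖Q t‖ ^ 2)
          + 1 / (2 * Real.sqrt R) * Gfun k η t * (Nfun R k η t + cτ * Jfun k η t)
              * (η - k * t) ^ 2 * (Z t * (starRingEnd ℂ) (Q t)).re)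
    + cβ * betaDef μ k *
        (k * (η - k * t) * (‖Z t‖ ^ 2 + ‖Q t‖ ^ 2)
          - 1 / (2 * Real.sqrt R) * Gfun k η t * (k * (η - k * t))
              * (Z t * (starRingEnd ℂ) (Q t)).re)

/-- The pointwise dissipation functional `D_k`. -/
def dissip (R cτ cα cβ μ k η : ℝ) (Z Q : ℝ → ℂ) (t : ℝ) : ℝ :=
  μ * pfun k η t * (‖Z t‖ ^ 2 + ‖Q t‖ ^ 2)
    + cτ * (k ^ 2 / pfun k η t) * (‖Z t‖ ^ 2 + ‖Q t‖ ^ 2)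
    + cα * alphaDef μ k * μ * pfun k η t * (η - k * t) ^ 2 * (‖Z t‖ ^ 2 + ‖Q t‖ ^ 2)
    + cτ * cα * alphaDef μ k * (k ^ 2 * (η - k * t) ^ 2 / pfun k η t)
        * (‖Z t‖ ^ 2 + ‖Q t‖ ^ 2)
    + 1 / Real.sqrt R * (|k| ^ 3 / (pfun k η t * Real.sqrt (pfun k η t)))
        * (‖Z t‖ ^ 2 + ‖Q t‖ ^ 2)
    + cα / Real.sqrt R * alphaDef μ k
        * (|k| ^ 3 * (η - k * t) ^ 2 / (pfun k η t * Real.sqrt (pfun k η t)))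
        * (‖Z t‖ ^ 2 + ‖Q t‖ ^ 2)
    + cβ * betaDef μ k * k ^ 2 * (‖Z t‖ ^ 2 + ‖Q t‖ ^ 2)

/-!
With `w = √R`, consider the quadratic form `T = |Ω|² / √p + R √p |Θ|²`. The coupling terms cancel
in `T'`, which leaves `T' = -p'/(2p) · (|Ω|² / √p - R √p |Θ|²)`. The cross term `X = Im (Ω̄ Θ)`
satisfies `X' = -(k/√p) · (|Ω|² / √p - R √p |Θ|²)`, so that `E = T - p'/(2k√p) · X` has
`E' = -(p'/(2k√p))' · X`. By AM-GM `2w|X| ≤ T`, and `|p'| ≤ 2|k|√p`; hence, as `2w > 1`, `E` is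
comparable to `T` and `|E'| ≤ G'/(2(2w - 1)) · E`, where `G = p'/(|k|√p)` is increasing and takes
values in `[-2, 2]`. Thus `E` varies at most by the factor `exp (2/(2w - 1))` for all time.
-/

open Set
open scoped ComplexConjugate

section Gronwall

variable {D : Set ℝ} {f f' g g' : ℝ → ℝ}

lemma monotoneOn_mul_exp (hD : Convex ℝ D) (hf : ∀ x ∈ D, HasDerivWithinAt f (f' x) D x)
    (hg : ∀ x ∈ D, HasDerivWithinAt g (g' x) D x) (h : ∀ x ∈ D, -(g' x * f x) ≤ f' x) :
    MonotoneOn (fun x => f x * exp (g x)) D := by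
  have hderiv : ∀ x ∈ D, HasDerivWithinAt (fun x => f x * exp (g x))
      ((f' x + g' x * f x) * exp (g x)) D x := fun x hx =>
    ((hf x hx).mul (hg x hx).exp).congr_deriv (by ring)
  refine monotoneOn_of_hasDerivWithinAt_nonneg hD (fun x hx => (hderiv x hx).continuousWithinAt)
    (fun x hx => (hderiv x (interior_subset hx)).mono interior_subset) fun x hx => ?_
  exact mul_nonneg (by linarith [h x (interior_subset hx)]) (exp_pos _).le

lemma le_exp_abs_sub_mul (hD : Convex ℝ D) (hf : ∀ x ∈ D, HasDerivWithinAt f (f' x) D x)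
    (hg : ∀ x ∈ D, HasDerivWithinAt g (g' x) D x) (hf₀ : ∀ x ∈ D, 0 ≤ f x)
    (h : ∀ x ∈ D, |f' x| ≤ g' x * f x) {x y : ℝ} (hx : x ∈ D) (hy : y ∈ D) :
    f x ≤ exp |g x - g y| * f y := by
  suffices ∃ c, |c| = |g x - g y| ∧ f x ≤ exp c * f y by
    obtain ⟨c, hc, hle⟩ := this
    exact hle.trans (mul_le_mul_of_nonneg_right (exp_le_exp.2 (hc ▸ le_abs_self c)) (hf₀ y hy))
  rcases le_total x y with hxy | hyx
  · have hmono : f x * exp (g x) ≤ f y * exp (g y) :=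
      monotoneOn_mul_exp hD hf hg (fun z hz => (abs_le.1 (h z hz)).1) hx hy hxy
    refine ⟨g y - g x, abs_sub_comm _ _, ?_⟩
    rwa [exp_sub, div_mul_eq_mul_div, le_div_iff₀ (exp_pos _), mul_comm (exp (g y))]
  · have hanti : -f y * exp (-g y) ≤ -f x * exp (-g x) :=
      monotoneOn_mul_exp (f := fun z => -f z) (g := fun z => -g z) hD
        (fun z hz => (hf z hz).neg) (fun z hz => (hg z hz).neg)
        (fun z hz => by linarith [(abs_le.1 (h z hz)).2]) hy hx hyx
    refine ⟨g x - g y, rfl, ?_⟩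
    calc f x = exp (g x) * (f x * exp (-g x)) := by rw [exp_neg]; field_simp
      _ ≤ exp (g x) * (f y * exp (-g y)) := mul_le_mul_of_nonneg_left (by linarith) (exp_pos _).le
      _ = exp (g x - g y) * f y := by rw [sub_eq_add_neg, exp_add]; ring

end Gronwall

section Weight

variable {k : ℝ}

lemma pfun_pos (hk : k ≠ 0) (η t : ℝ) : 0 < pfun k η t := by
  unfold pfun; positivity

lemma hasDerivAt_pfun (k η t : ℝ) : HasDerivAt (pfun k η) (pder k η t) t := by
  have h : HasDerivAt (fun s => η - k * s) (-k) t := by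
    simpa using ((hasDerivAt_id t).const_mul k).const_sub η
  exact ((h.pow 2).const_add (k ^ 2)).congr_deriv (by unfold pder; ring)

lemma hasDerivAt_Gfun (hk : k ≠ 0) (η t : ℝ) :
    HasDerivAt (Gfun k η) (2 * |k| ^ 3 / √(pfun k η t) ^ 3) t := by
  have hs : 0 < √(pfun k η t) := sqrt_pos.2 (pfun_pos hk η t)
  have hpder : HasDerivAt (pder k η) (2 * k ^ 2) t :=
    ((((hasDerivAt_id t).const_mul k).const_sub η).const_mul (2 * k)).neg.congr_deriv (by ring)
  have hsqrt := (hasDerivAt_pfun k η t).sqrt (pfun_pos hk η t).ne'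
  refine (hpder.div (hsqrt.const_mul |k|) (by positivity)).congr_deriv ?_
  have hsq : √(pfun k η t) ^ 2 = k ^ 2 + (η - k * t) ^ 2 := sq_sqrt (pfun_pos hk η t).le
  have habs : |k| ^ 4 = k ^ 4 := by rw [← abs_pow, abs_of_nonneg (by positivity)]
  unfold pder
  field_simp
  rw [habs, hsq]
  ring

lemma abs_Gfun_le_two (hk : k ≠ 0) (η t : ℝ) : |Gfun k η t| ≤ 2 := by
  have hs : 0 < √(pfun k η t) := sqrt_pos.2 (pfun_pos hk η t)
  have hle : |η - k * t| ≤ √(pfun k η t) :=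
    abs_le_sqrt (by unfold pfun; linarith [sq_nonneg k])
  rw [Gfun, pder, abs_div, abs_neg, abs_of_pos (by positivity : 0 < |k| * √(pfun k η t)),
    div_le_iff₀ (by positivity), abs_mul, abs_mul, abs_two]
  calc 2 * |k| * |η - k * t| ≤ 2 * |k| * √(pfun k η t) := by gcongr
    _ = 2 * (|k| * √(pfun k η t)) := by ring

end Weight

/-- The symmetrized energy `|z|² / √p + R √p |v|²` of a vorticity mode `z` and a density mode `v`.
For `R = 1` it is the quantity to be bounded; at the Richardson number `R` the coupling between the
two modes cancels from its time derivative. -/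
def symEnergy (R p : ℝ) (z v : ℂ) : ℝ := ‖z‖ ^ 2 / √p + R * √p * ‖v‖ ^ 2

section SymEnergy

variable {R p : ℝ}

lemma symEnergy_nonneg (hR : 0 ≤ R) (p : ℝ) (z v : ℂ) : 0 ≤ symEnergy R p z v := by
  unfold symEnergy; positivity

lemma symEnergy_one_eq_rpow (hp : 0 ≤ p) (z v : ℂ) :
    symEnergy 1 p z v = p ^ (-(1 : ℝ) / 2) * ‖z‖ ^ 2 + p ^ ((1 : ℝ) / 2) * ‖v‖ ^ 2 := by
  rw [symEnergy, neg_div, rpow_neg hp, ← sqrt_eq_rpow]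
  ring

lemma symEnergy_le_max_mul (R p : ℝ) (z v : ℂ) :
    symEnergy R p z v ≤ max 1 R * symEnergy 1 p z v := by
  have hz : ‖z‖ ^ 2 / √p ≤ max 1 R * (‖z‖ ^ 2 / √p) :=
    le_mul_of_one_le_left (by positivity) (le_max_left 1 R)
  have hv : R * (√p * ‖v‖ ^ 2) ≤ max 1 R * (√p * ‖v‖ ^ 2) := by gcongr; exact le_max_right 1 R
  unfold symEnergy
  linarith

lemma min_mul_le_symEnergy (R p : ℝ) (z v : ℂ) :
    min 1 R * symEnergy 1 p z v ≤ symEnergy R p z v := by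
  have hz : min 1 R * (‖z‖ ^ 2 / √p) ≤ ‖z‖ ^ 2 / √p :=
    mul_le_of_le_one_left (by positivity) (min_le_left 1 R)
  have hv : min 1 R * (√p * ‖v‖ ^ 2) ≤ R * (√p * ‖v‖ ^ 2) := by gcongr; exact min_le_right 1 R
  unfold symEnergy
  linarith

lemma two_mul_sqrt_mul_abs_im_le_symEnergy (hR : 0 ≤ R) (hp : 0 < p) (z v : ℂ) :
    2 * √R * |(conj z * v).im| ≤ symEnergy R p z v := by
  have him : |(conj z * v).im| ≤ ‖z‖ * ‖v‖ := by
    simpa using Complex.abs_im_le_norm (conj z * v)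
  have hsquare : symEnergy R p z v - 2 * √R * (‖z‖ * ‖v‖) = (‖z‖ - √R * √p * ‖v‖) ^ 2 / √p := by
    unfold symEnergy
    field_simp
    linear_combination -(√p ^ 2 * ‖v‖ ^ 2) * sq_sqrt hR
  calc 2 * √R * |(conj z * v).im| ≤ 2 * √R * (‖z‖ * ‖v‖) := by gcongr
    _ ≤ symEnergy R p z v := by
      rw [← sub_nonneg, hsquare]
      positivity

end SymEnergy

/-- `(Ω, Θ)` satisfies at time `t` the inviscid linearized Boussinesq–Couette system at horizontal
frequency `k` and Richardson number `R`, for a general symbol `p`. -/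
def IsInviscidSolAt (R k : ℝ) (p : ℝ → ℝ) (Ω Θ : ℝ → ℂ) (t : ℝ) : Prop :=
  HasDerivAt Ω (-((R : ℂ) * Complex.I * (k : ℂ)) * Θ t) t ∧
    HasDerivAt Θ (-(Complex.I * (k : ℂ) / ((p t : ℝ) : ℂ)) * Ω t) t

namespace IsInviscidSolAt

variable {R k p' t : ℝ} {p : ℝ → ℝ} {Ω Θ : ℝ → ℂ}

lemma hasDerivAt_norm_sq_vorticity (h : IsInviscidSolAt R k p Ω Θ t) :
    HasDerivAt (fun s => ‖Ω s‖ ^ 2) (2 * R * k * (conj (Ω t) * Θ t).im) t := by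
  refine h.1.norm_sq.congr_deriv ?_
  simp only [Complex.inner, Complex.mul_re, Complex.mul_im, Complex.neg_re, Complex.neg_im,
    Complex.conj_re, Complex.conj_im, Complex.ofReal_re, Complex.ofReal_im, Complex.I_re,
    Complex.I_im]
  ring

lemma hasDerivAt_norm_sq_density (h : IsInviscidSolAt R k p Ω Θ t) :
    HasDerivAt (fun s => ‖Θ s‖ ^ 2) (-(2 * k / p t) * (conj (Ω t) * Θ t).im) t := by
  refine h.2.norm_sq.congr_deriv ?_
  simp only [Complex.inner, Complex.mul_re, Complex.mul_im, Complex.neg_re, Complex.neg_im,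
    Complex.conj_re, Complex.conj_im, Complex.div_ofReal_re, Complex.div_ofReal_im,
    Complex.ofReal_re, Complex.ofReal_im, Complex.I_re, Complex.I_im]
  ring

lemma hasDerivAt_im_conj_mul (h : IsInviscidSolAt R k p Ω Θ t) :
    HasDerivAt (fun s => (conj (Ω s) * Θ s).im) (k * (R * ‖Θ t‖ ^ 2 - ‖Ω t‖ ^ 2 / p t)) t := by
  refine (Complex.imCLM.hasFDerivAt.comp_hasDerivAt t (h.1.star.mul h.2)).congr_deriv ?_
  simp only [Complex.imCLM_apply, Complex.star_def, Complex.sq_norm, Complex.normSq_apply,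
    Complex.add_im, Complex.mul_re, Complex.mul_im, Complex.neg_re, Complex.neg_im,
    Complex.conj_re, Complex.conj_im, Complex.div_ofReal_re, Complex.div_ofReal_im,
    Complex.ofReal_re, Complex.ofReal_im, Complex.I_re, Complex.I_im]
  ring

lemma hasDerivAt_symEnergy (h : IsInviscidSolAt R k p Ω Θ t) (hp : HasDerivAt p p' t)
    (hpos : 0 < p t) :
    HasDerivAt (fun s => symEnergy R (p s) (Ω s) (Θ s))
      (-(p' / (2 * p t)) * (‖Ω t‖ ^ 2 / √(p t) - R * √(p t) * ‖Θ t‖ ^ 2)) t := by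
  have hs : 0 < √(p t) := sqrt_pos.2 hpos
  have hsqrt := hp.sqrt hpos.ne'
  refine ((h.hasDerivAt_norm_sq_vorticity.div hsqrt hs.ne').add
    ((hsqrt.const_mul R).mul h.hasDerivAt_norm_sq_density)).congr_deriv ?_
  have hsq : p t = √(p t) ^ 2 := (sq_sqrt hpos.le).symm
  generalize √(p t) = s at *
  rw [hsq]
  field_simp
  ring

end IsInviscidSolAt

/-- The symmetrized energy corrected by a multiple of the cross term `Im (z̄ v)`. The coefficient
`k / |k| · G / 2 = p' / (2 k √p)` is the one for which the derivative of the cross term offsets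
that of the symmetrized energy along inviscid solutions. -/
def modifiedEnergy (R k η t : ℝ) (z v : ℂ) : ℝ :=
  symEnergy R (pfun k η t) z v - k / |k| * (Gfun k η t / 2) * (conj z * v).im

section ModifiedEnergy

variable {R k η : ℝ} {D : Set ℝ} {Ω Θ : ℝ → ℂ}

lemma one_lt_two_mul_sqrt (hR : 1 / 4 < R) : 1 < 2 * √R := by
  have : 1 / 2 < √R := lt_sqrt_of_sq_lt (by linarith)
  linarith

lemma IsInviscidSolAt.hasDerivAt_modifiedEnergy {t : ℝ} (hk : k ≠ 0)
    (h : IsInviscidSolAt R k (pfun k η) Ω Θ t) :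
    HasDerivAt (fun s => modifiedEnergy R k η s (Ω s) (Θ s))
      (-(k / |k| * (|k| ^ 3 / √(pfun k η t) ^ 3)) * (conj (Ω t) * Θ t).im) t := by
  have hpos := pfun_pos hk η t
  have hs : 0 < √(pfun k η t) := sqrt_pos.2 hpos
  refine ((h.hasDerivAt_symEnergy (hasDerivAt_pfun k η t) hpos).sub
    ((((hasDerivAt_Gfun hk η t).div_const 2).const_mul (k / |k|)).mul
      h.hasDerivAt_im_conj_mul)).congr_deriv ?_
  have hcancel : pder k η t / (2 * pfun k η t) *
        (‖Ω t‖ ^ 2 / √(pfun k η t) - R * √(pfun k η t) * ‖Θ t‖ ^ 2) +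
      k / |k| * (Gfun k η t / 2) * (k * (R * ‖Θ t‖ ^ 2 - ‖Ω t‖ ^ 2 / pfun k η t)) = 0 := by
    have hsq : pfun k η t = √(pfun k η t) ^ 2 := (sq_sqrt hpos.le).symm
    unfold Gfun
    generalize √(pfun k η t) = s at *
    rw [hsq]
    field_simp
    rw [sq_abs]
    ring
  linear_combination -hcancel

lemma abs_two_mul_sqrt_mul_modifiedEnergy_sub_le (hR : 0 ≤ R) (hk : k ≠ 0) (η t : ℝ) (z v : ℂ) :
    |2 * √R * (modifiedEnergy R k η t z v - symEnergy R (pfun k η t) z v)| ≤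
      symEnergy R (pfun k η t) z v := by
  have hcoeff : |k / |k| * (Gfun k η t / 2)| ≤ 1 := by
    rw [abs_mul, abs_div, abs_abs, div_self (abs_ne_zero.2 hk), one_mul, abs_div, abs_two]
    linarith [abs_Gfun_le_two hk η t]
  calc |2 * √R * (modifiedEnergy R k η t z v - symEnergy R (pfun k η t) z v)|
      = 2 * √R * (|k / |k| * (Gfun k η t / 2)| * |(conj z * v).im|) := by
        rw [modifiedEnergy, sub_sub_cancel_left, abs_mul, abs_of_nonneg (by positivity), abs_neg,
          abs_mul]
    _ ≤ 2 * √R * |(conj z * v).im| := by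
        gcongr
        exact mul_le_of_le_one_left (abs_nonneg _) hcoeff
    _ ≤ symEnergy R (pfun k η t) z v :=
        two_mul_sqrt_mul_abs_im_le_symEnergy hR (pfun_pos hk η t) z v

lemma mul_symEnergy_le_modifiedEnergy (hR : 0 ≤ R) (hk : k ≠ 0) (η t : ℝ) (z v : ℂ) :
    (2 * √R - 1) * symEnergy R (pfun k η t) z v ≤ 2 * √R * modifiedEnergy R k η t z v := by
  linarith [(abs_le.1 (abs_two_mul_sqrt_mul_modifiedEnergy_sub_le hR hk η t z v)).1]

lemma modifiedEnergy_le_mul_symEnergy (hR : 0 ≤ R) (hk : k ≠ 0) (η t : ℝ) (z v : ℂ) :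
    2 * √R * modifiedEnergy R k η t z v ≤ (2 * √R + 1) * symEnergy R (pfun k η t) z v := by
  linarith [(abs_le.1 (abs_two_mul_sqrt_mul_modifiedEnergy_sub_le hR hk η t z v)).2]

lemma modifiedEnergy_nonneg (hR : 1 / 4 < R) (hk : k ≠ 0) (η t : ℝ) (z v : ℂ) :
    0 ≤ modifiedEnergy R k η t z v := by
  have hw := one_lt_two_mul_sqrt hR
  have hR₀ : 0 ≤ R := by linarith
  refine nonneg_of_mul_nonneg_right (a := 2 * √R) ?_ (by linarith)
  exact (mul_nonneg (by linarith) (symEnergy_nonneg hR₀ _ z v)).trans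
    (mul_symEnergy_le_modifiedEnergy hR₀ hk η t z v)

lemma abs_im_le_modifiedEnergy_div (hR : 1 / 4 < R) (hk : k ≠ 0) (η t : ℝ) (z v : ℂ) :
    |(conj z * v).im| ≤ modifiedEnergy R k η t z v / (2 * √R - 1) := by
  have hw := one_lt_two_mul_sqrt hR
  have hR₀ : 0 ≤ R := by linarith
  rw [le_div_iff₀ (by linarith)]
  refine le_of_mul_le_mul_left (a := 2 * √R) ?_ (by linarith)
  calc 2 * √R * (|(conj z * v).im| * (2 * √R - 1))
      = (2 * √R - 1) * (2 * √R * |(conj z * v).im|) := by ring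
    _ ≤ (2 * √R - 1) * symEnergy R (pfun k η t) z v :=
        mul_le_mul_of_nonneg_left
          (two_mul_sqrt_mul_abs_im_le_symEnergy hR₀ (pfun_pos hk η t) z v) (by linarith)
    _ ≤ 2 * √R * modifiedEnergy R k η t z v := mul_symEnergy_le_modifiedEnergy hR₀ hk η t z v

lemma IsInviscidSolAt.abs_deriv_modifiedEnergy_le {t : ℝ} (hR : 1 / 4 < R) (hk : k ≠ 0)
    (h : IsInviscidSolAt R k (pfun k η) Ω Θ t) :
    |deriv (fun s => modifiedEnergy R k η s (Ω s) (Θ s)) t| ≤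
      2 * |k| ^ 3 / √(pfun k η t) ^ 3 / (2 * (2 * √R - 1)) *
        modifiedEnergy R k η t (Ω t) (Θ t) := by
  have hs : 0 < √(pfun k η t) := sqrt_pos.2 (pfun_pos hk η t)
  calc |deriv (fun s => modifiedEnergy R k η s (Ω s) (Θ s)) t|
      = |k| ^ 3 / √(pfun k η t) ^ 3 * |(conj (Ω t) * Θ t).im| := by
        rw [(h.hasDerivAt_modifiedEnergy hk).deriv, abs_mul, abs_neg, abs_mul, abs_div k, abs_abs,
          div_self (abs_ne_zero.2 hk), one_mul, abs_of_pos (by positivity)]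
    _ ≤ |k| ^ 3 / √(pfun k η t) ^ 3 *
          (modifiedEnergy R k η t (Ω t) (Θ t) / (2 * √R - 1)) := by
        gcongr
        exact abs_im_le_modifiedEnergy_div hR hk η t (Ω t) (Θ t)
    _ = 2 * |k| ^ 3 / √(pfun k η t) ^ 3 / (2 * (2 * √R - 1)) *
          modifiedEnergy R k η t (Ω t) (Θ t) := by
        field_simp

lemma modifiedEnergy_le_exp_mul (hR : 1 / 4 < R) (hk : k ≠ 0) (hD : Convex ℝ D)
    (hsol : ∀ t ∈ D, IsInviscidSolAt R k (pfun k η) Ω Θ t) {x y : ℝ} (hx : x ∈ D) (hy : y ∈ D) :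
    modifiedEnergy R k η x (Ω x) (Θ x) ≤
      exp (2 / (2 * √R - 1)) * modifiedEnergy R k η y (Ω y) (Θ y) := by
  have hw : 0 < 2 * √R - 1 := sub_pos.2 (one_lt_two_mul_sqrt hR)
  have hG : |Gfun k η x - Gfun k η y| ≤ 2 * 2 := by
    linarith [abs_sub (Gfun k η x) (Gfun k η y), abs_Gfun_le_two hk η x, abs_Gfun_le_two hk η y]
  have hexponent : |Gfun k η x / (2 * (2 * √R - 1)) - Gfun k η y / (2 * (2 * √R - 1))| ≤
      2 / (2 * √R - 1) := by
    rw [← sub_div, abs_div, abs_of_pos (by positivity : 0 < 2 * (2 * √R - 1)),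
      ← mul_div_mul_left 2 (2 * √R - 1) two_ne_zero]
    gcongr
  have hgrowth := le_exp_abs_sub_mul (g := fun t => Gfun k η t / (2 * (2 * √R - 1))) hD
    (fun t ht => ((hsol t ht).hasDerivAt_modifiedEnergy
      hk).differentiableAt.hasDerivAt.hasDerivWithinAt)
    (fun t _ => ((hasDerivAt_Gfun hk η t).div_const _).hasDerivWithinAt)
    (fun t _ => modifiedEnergy_nonneg hR hk η t (Ω t) (Θ t))
    (fun t ht => (hsol t ht).abs_deriv_modifiedEnergy_le hR hk) hx hy
  exact hgrowth.trans (mul_le_mul_of_nonneg_right (exp_le_exp.2 hexponent)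
    (modifiedEnergy_nonneg hR hk η y (Ω y) (Θ y)))

lemma symEnergy_le_mul_symEnergy (hR : 1 / 4 < R) (hk : k ≠ 0) (hD : Convex ℝ D)
    (hsol : ∀ t ∈ D, IsInviscidSolAt R k (pfun k η) Ω Θ t) {x y : ℝ} (hx : x ∈ D) (hy : y ∈ D) :
    symEnergy R (pfun k η x) (Ω x) (Θ x) ≤
      (2 * √R + 1) / (2 * √R - 1) * exp (2 / (2 * √R - 1)) *
        symEnergy R (pfun k η y) (Ω y) (Θ y) := by
  have hw : 0 < 2 * √R - 1 := sub_pos.2 (one_lt_two_mul_sqrt hR)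
  have hR₀ : 0 ≤ R := by linarith
  rw [div_mul_eq_mul_div, div_mul_eq_mul_div, le_div_iff₀ hw]
  calc symEnergy R (pfun k η x) (Ω x) (Θ x) * (2 * √R - 1)
      ≤ 2 * √R * modifiedEnergy R k η x (Ω x) (Θ x) := by
        rw [mul_comm]
        exact mul_symEnergy_le_modifiedEnergy hR₀ hk η x _ _
    _ ≤ 2 * √R * (exp (2 / (2 * √R - 1)) * modifiedEnergy R k η y (Ω y) (Θ y)) := by
        gcongr
        exact modifiedEnergy_le_exp_mul hR hk hD hsol hx hy
    _ = exp (2 / (2 * √R - 1)) * (2 * √R * modifiedEnergy R k η y (Ω y) (Θ y)) := by ring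
    _ ≤ exp (2 / (2 * √R - 1)) * ((2 * √R + 1) * symEnergy R (pfun k η y) (Ω y) (Θ y)) := by
        exact mul_le_mul_of_nonneg_left (modifiedEnergy_le_mul_symEnergy hR₀ hk η y _ _)
          (exp_pos _).le
    _ = (2 * √R + 1) * exp (2 / (2 * √R - 1)) * symEnergy R (pfun k η y) (Ω y) (Θ y) := by ring

end ModifiedEnergy

/-- A bound, depending only on the Richardson number `R`, for the ratio of the energies
`symEnergy 1` of an inviscid solution at any two times. The factor `max 1 R / min 1 R` is the cost
of passing to `symEnergy R` and back. -/
def energyRatioBound (R : ℝ) : ℝ :=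
  max 1 R / min 1 R * ((2 * √R + 1) / (2 * √R - 1) * exp (2 / (2 * √R - 1)))

lemma one_le_energyRatioBound {R : ℝ} (hR : 1 / 4 < R) : 1 ≤ energyRatioBound R := by
  have hw : 0 < 2 * √R - 1 := sub_pos.2 (one_lt_two_mul_sqrt hR)
  have hmin : 0 < min 1 R := lt_min one_pos (by linarith)
  refine one_le_mul_of_one_le_of_one_le ((one_le_div hmin).2 min_le_max)
    (one_le_mul_of_one_le_of_one_le ((one_le_div hw).2 (by linarith)) (one_le_exp ?_))
  positivity

lemma symEnergy_one_le_energyRatioBound_mul {R k η : ℝ} (hR : 1 / 4 < R) (hk : k ≠ 0) {D : Set ℝ}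
    (hD : Convex ℝ D) {Ω Θ : ℝ → ℂ} (hsol : ∀ t ∈ D, IsInviscidSolAt R k (pfun k η) Ω Θ t)
    {x y : ℝ} (hx : x ∈ D) (hy : y ∈ D) :
    symEnergy 1 (pfun k η x) (Ω x) (Θ x) ≤
      energyRatioBound R * symEnergy 1 (pfun k η y) (Ω y) (Θ y) := by
  have hw : 0 < 2 * √R - 1 := sub_pos.2 (one_lt_two_mul_sqrt hR)
  have hmin : 0 < min 1 R := lt_min one_pos (by linarith)
  rw [energyRatioBound, div_mul_eq_mul_div, div_mul_eq_mul_div, le_div_iff₀ hmin]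
  set K := (2 * √R + 1) / (2 * √R - 1) * exp (2 / (2 * √R - 1))
  calc symEnergy 1 (pfun k η x) (Ω x) (Θ x) * min 1 R
      ≤ symEnergy R (pfun k η x) (Ω x) (Θ x) := by
        rw [mul_comm]
        exact min_mul_le_symEnergy R _ _ _
    _ ≤ K * symEnergy R (pfun k η y) (Ω y) (Θ y) :=
        symEnergy_le_mul_symEnergy hR hk hD hsol hx hy
    _ ≤ K * (max 1 R * symEnergy 1 (pfun k η y) (Ω y) (Θ y)) := by
        gcongr
        exact symEnergy_le_max_mul R _ _ _
    _ = max 1 R * K * symEnergy 1 (pfun k η y) (Ω y) (Θ y) := by ring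

/-- pointwise inviscid conservation law: for `R > 1/4` there
exist `0 < C₁ ≤ C₂` depending only on `R` such that for all `k ≠ 0`, `η`, and
every solution of the inviscid linearized Boussinesq–Couette system
`Ω′ = −R·i·k·Θ`, `Θ′ = −(i·k/p)·Ω`, one has for all `t ≥ 0`
`C₁·[(k²+η²)^{−1/2}|Ω(0)|² + (k²+η²)^{1/2}|Θ(0)|²]
  ≤ p(t)^{−1/2}|Ω(t)|² + p(t)^{1/2}|Θ(t)|²
  ≤ C₂·[(k²+η²)^{−1/2}|Ω(0)|² + (k²+η²)^{1/2}|Θ(0)|²]`. -/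
theorem stmt8 (R : ℝ) (hR : 1 / 4 < R) :
    ∃ C₁ C₂ : ℝ, 0 < C₁ ∧ C₁ ≤ C₂ ∧
      ∀ k η : ℝ, k ≠ 0 → ∀ Ω Θ : ℝ → ℂ,
        (∀ t : ℝ, 0 ≤ t →
          HasDerivAt Ω (-((R : ℂ) * Complex.I * (k : ℂ)) * Θ t) t ∧
          HasDerivAt Θ (-(Complex.I * (k : ℂ) / ((pfun k η t : ℝ) : ℂ)) * Ω t) t) →
        ∀ t : ℝ, 0 ≤ t →
          C₁ * ((k ^ 2 + η ^ 2) ^ (-(1 : ℝ) / 2) * ‖Ω 0‖ ^ 2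
                + (k ^ 2 + η ^ 2) ^ ((1 : ℝ) / 2) * ‖Θ 0‖ ^ 2)
            ≤ pfun k η t ^ (-(1 : ℝ) / 2) * ‖Ω t‖ ^ 2
                + pfun k η t ^ ((1 : ℝ) / 2) * ‖Θ t‖ ^ 2 ∧
          pfun k η t ^ (-(1 : ℝ) / 2) * ‖Ω t‖ ^ 2
              + pfun k η t ^ ((1 : ℝ) / 2) * ‖Θ t‖ ^ 2
            ≤ C₂ * ((k ^ 2 + η ^ 2) ^ (-(1 : ℝ) / 2) * ‖Ω 0‖ ^ 2
                + (k ^ 2 + η ^ 2) ^ ((1 : ℝ) / 2) * ‖Θ 0‖ ^ 2) := by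
  have hC := one_le_energyRatioBound hR
  have hC₀ : 0 < energyRatioBound R := one_pos.trans_le hC
  refine ⟨(energyRatioBound R)⁻¹, energyRatioBound R, inv_pos.2 hC₀,
    (inv_le_one_of_one_le₀ hC).trans hC, fun k η hk Ω Θ hsol t ht => ?_⟩
  have hbound {x y : ℝ} (hx : 0 ≤ x) (hy : 0 ≤ y) :=
    symEnergy_one_le_energyRatioBound_mul hR hk (convex_Ici 0) hsol hx hy
  have hp₀ : k ^ 2 + η ^ 2 = pfun k η 0 := by simp [pfun]
  rw [hp₀, ← symEnergy_one_eq_rpow (pfun_pos hk η 0).le,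
    ← symEnergy_one_eq_rpow (pfun_pos hk η t).le, inv_mul_le_iff₀ hC₀]
  exact ⟨hbound le_rfl ht, hbound ht le_rfl⟩
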